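/- arXiv:1512.08879 — 2 statements merged into one kernel-verified Lean document; each statement's English description precedes it below -/
import Mathlib

section
/- Fix t > 0 with t ≠ 2 and x ∈ ℝ, and let F_n(x) = Φ(g_n)^{n} − (1 − Φ(g_n))^{n} where g_n = (c_n x + d_n)^{1/t}, defined for n large enough that c_n x + d_n > 0; F_n(x) equals the probability P(|M_n|^t ≤ c_n x + d_n) for the maximum M_n of n independent standard normal random variables. Then as n → ∞, F_n(x) = Λ(x) + b_n^{−2} Λ(x) e^{−x} ( k₁ + b_n^{−2} k₂ + O(b_n^{−4}) ), where k₁ = 1 + x + ((2−t)/2) x² and k₂ = −( 3 + 3x + (3/2) x² + ((2−t)(2t+1)/6) x³ + ((t−2)²/8) x⁴ − (e^{−x}/2)(1 + x + ((2−t)/2) x²)² ); that is, there exist C > 0 and N such that for all n ≥ N, |F_n(x) − Λ(x) − b_n^{−2} Λ(x) e^{−x} k₁ − b_n^{−4} Λ(x) e^{−x} k₂| ≤ C b_n^{−6}. -/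
open Real Filter Topology

/-- The standard normal distribution function. -/
noncomputable def stdNormalCDF (x : ℝ) : ℝ :=
  ∫ u in Set.Iic x, Real.exp (-u ^ 2 / 2) / Real.sqrt (2 * Real.pi)

/-- The Gumbel distribution function `Λ(x) = exp(−e^{−x})`. -/
noncomputable def gumbel (x : ℝ) : ℝ := Real.exp (-Real.exp (-x))

open Asymptotics MeasureTheory Set

/-!
With `φ` the standard normal density and `g` the threshold, the equation for `b n` says
`n = b n / φ (b n)`, so `n (1 - Φ(g))` is the product of `g (1 - Φ(g)) / φ(g)`, `b n / g` and
`exp ((b n ^ 2 - g ^ 2) / 2)`. Since `g = b n (1 + t x / b n ^ 2) ^ (1 / t)`, the last two factors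
expand in powers of `b n ^ (-2)` by the binomial series, and the first by repeated integration by
parts. Writing `u = 1 - Φ(g)`, we have `u = O(1 / n)`, and `1 / n` is smaller than every power of
`1 / b n`; hence both `u ^ n` and the error in `(1 - u) ^ n ≈ exp (-n u)` are negligible, and
composing with the exponential gives the expansion.
-/

/-! ### Second-order expansions -/

/-- `f = a₀ + a₁ h + a₂ h² + O(h³)` along the filter `l`: a second-order asymptotic expansion of `f`
in powers of the gauge `h`. That `h` tends to zero is not part of the notion. -/
def HasQuadraticExpansion {α : Type*} (l : Filter α) (h f : α → ℝ) (a₀ a₁ a₂ : ℝ) : Prop :=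
  (fun x => f x - (a₀ + a₁ * h x + a₂ * h x ^ 2)) =O[l] fun x => h x ^ 3

namespace HasQuadraticExpansion

variable {α β : Type*} {l : Filter α} {m : Filter β} {h f g : α → ℝ} {a₀ a₁ a₂ b₀ b₁ b₂ : ℝ}

theorem congr_coeff (hf : HasQuadraticExpansion l h f a₀ a₁ a₂)
    (h₀ : a₀ = b₀) (h₁ : a₁ = b₁) (h₂ : a₂ = b₂) : HasQuadraticExpansion l h f b₀ b₁ b₂ := by
  subst h₀ h₁ h₂
  exact hf

theorem add_isBigO (hf : HasQuadraticExpansion l h f a₀ a₁ a₂)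
    (hgf : (fun x => g x - f x) =O[l] fun x => h x ^ 3) :
    HasQuadraticExpansion l h g a₀ a₁ a₂ :=
  (IsBigO.add hf hgf).congr_left fun x => by ring

theorem congr' (hf : HasQuadraticExpansion l h f a₀ a₁ a₂) (hfg : f =ᶠ[l] g) :
    HasQuadraticExpansion l h g a₀ a₁ a₂ :=
  IsBigO.congr' hf (hfg.mono fun x hx => by simp only [hx]) .rfl

theorem comp_tendsto (hf : HasQuadraticExpansion l h f a₀ a₁ a₂) {k : β → α}
    (hk : Tendsto k m l) : HasQuadraticExpansion m (h ∘ k) (f ∘ k) a₀ a₁ a₂ :=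
  IsBigO.comp_tendsto hf hk

theorem polynomial (l : Filter α) (h : α → ℝ) (a₀ a₁ a₂ : ℝ) :
    HasQuadraticExpansion l h (fun x => a₀ + a₁ * h x + a₂ * h x ^ 2) a₀ a₁ a₂ :=
  (isBigO_zero _ _).congr_left fun x => by ring

theorem const (l : Filter α) (h : α → ℝ) (c : ℝ) : HasQuadraticExpansion l h (fun _ => c) c 0 0 :=
  (polynomial l h c 0 0).congr' (.of_forall fun x => by ring)

theorem add (hf : HasQuadraticExpansion l h f a₀ a₁ a₂)
    (hg : HasQuadraticExpansion l h g b₀ b₁ b₂) :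
    HasQuadraticExpansion l h (fun x => f x + g x) (a₀ + b₀) (a₁ + b₁) (a₂ + b₂) :=
  (IsBigO.add hf hg).congr_left fun x => by ring

theorem const_mul (hf : HasQuadraticExpansion l h f a₀ a₁ a₂) (c : ℝ) :
    HasQuadraticExpansion l h (fun x => c * f x) (c * a₀) (c * a₁) (c * a₂) :=
  (IsBigO.const_mul_left hf c).congr_left fun x => by ring

theorem tendsto_polynomial (hh : Tendsto h l (𝓝 0)) (a₀ a₁ a₂ : ℝ) :
    Tendsto (fun x => a₀ + a₁ * h x + a₂ * h x ^ 2) l (𝓝 a₀) := by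
  simpa using ((hh.const_mul a₁).const_add a₀).add ((hh.pow 2).const_mul a₂)

theorem tendsto (hf : HasQuadraticExpansion l h f a₀ a₁ a₂) (hh : Tendsto h l (𝓝 0)) :
    Tendsto f l (𝓝 a₀) := by
  have hrem := IsBigO.trans_tendsto hf (by simpa using hh.pow 3)
  simpa using hrem.add (tendsto_polynomial hh a₀ a₁ a₂)

theorem mul (hf : HasQuadraticExpansion l h f a₀ a₁ a₂)
    (hg : HasQuadraticExpansion l h g b₀ b₁ b₂) (hh : Tendsto h l (𝓝 0)) :
    HasQuadraticExpansion l h (fun x => f x * g x)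
      (a₀ * b₀) (a₀ * b₁ + a₁ * b₀) (a₀ * b₂ + a₁ * b₁ + a₂ * b₀) := by
  have hf_rem : (fun x => (f x - (a₀ + a₁ * h x + a₂ * h x ^ 2)) * g x) =O[l]
      fun x => h x ^ 3 := by
    simpa using IsBigO.mul hf ((hg.tendsto hh).isBigO_one ℝ)
  have hg_rem : (fun x => (a₀ + a₁ * h x + a₂ * h x ^ 2) *
      (g x - (b₀ + b₁ * h x + b₂ * h x ^ 2))) =O[l] fun x => h x ^ 3 := by
    simpa using IsBigO.mul ((tendsto_polynomial hh a₀ a₁ a₂).isBigO_one ℝ) hg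
  have hpoly_rem : (fun x => h x ^ 3 * ((a₁ * b₂ + a₂ * b₁) + (a₂ * b₂) * h x + 0 * h x ^ 2))
      =O[l] fun x => h x ^ 3 := by
    simpa using (isBigO_refl (fun x => h x ^ 3) l).mul
      ((tendsto_polynomial hh (a₁ * b₂ + a₂ * b₁) (a₂ * b₂) 0).isBigO_one ℝ)
  exact ((hf_rem.add hg_rem).add hpoly_rem).congr_left fun x => by ring

theorem isBigO_self (hf : HasQuadraticExpansion l h f 0 a₁ a₂) (hh : Tendsto h l (𝓝 0)) :
    f =O[l] h := by
  have hrem : (fun x => h x ^ 3) =O[l] h := by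
    simpa [pow_succ'] using (isBigO_refl h l).mul ((hh.pow 2).isBigO_one ℝ)
  have hpoly : (fun x => h x * (a₁ + a₂ * h x + 0 * h x ^ 2)) =O[l] h := by
    simpa using (isBigO_refl h l).mul ((tendsto_polynomial hh a₁ a₂ 0).isBigO_one ℝ)
  exact ((IsBigO.trans hf hrem).add hpoly).congr_left fun x => by ring

theorem comp {s φ : β → ℝ} {k : α → β} {c₀ c₁ c₂ : ℝ} (hφ : HasQuadraticExpansion m s φ c₀ c₁ c₂)
    (hk : Tendsto k l m) (hs : HasQuadraticExpansion l h (fun x => s (k x)) 0 a₁ a₂)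
    (hh : Tendsto h l (𝓝 0)) :
    HasQuadraticExpansion l h (fun x => φ (k x)) c₀ (c₁ * a₁) (c₁ * a₂ + c₂ * a₁ ^ 2) := by
  have hpoly := ((const l h c₀).add (hs.const_mul c₁)).add ((hs.mul hs hh).const_mul c₂)
  have hrem := (hφ.comp_tendsto hk).trans ((hs.isBigO_self hh).pow 3)
  refine (hpoly.add_isBigO (hrem.congr_left fun x => ?_)).congr_coeff ?_ ?_ ?_
  · simp only [Function.comp_apply]
    ring
  all_goals ring

theorem exp_id : HasQuadraticExpansion (𝓝 0) id exp 1 1 (1 / 2) := by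
  refine (exp_sub_sum_range_isBigO_pow 3).congr_left fun y => ?_
  simp only [Finset.sum_range_succ, Finset.sum_range_zero, Nat.factorial, id]
  norm_num
  ring

protected theorem exp (hf : HasQuadraticExpansion l h f a₀ a₁ a₂) (hh : Tendsto h l (𝓝 0)) :
    HasQuadraticExpansion l h (fun x => exp (f x))
      (exp a₀) (exp a₀ * a₁) (exp a₀ * (a₂ + a₁ ^ 2 / 2)) := by
  have hsub : HasQuadraticExpansion l h (fun x => f x - a₀) 0 a₁ a₂ :=
    ((hf.add (const l h (-a₀))).congr' (.of_forall fun x => (sub_eq_add_neg _ _).symm)).congr_coeff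
      (by ring) (by ring) (by ring)
  have hexp := (exp_id.comp (hsub.tendsto hh) hsub hh).const_mul (exp a₀)
  refine (hexp.congr' (.of_forall fun x => ?_)).congr_coeff (by ring) (by ring) (by ring)
  simp only [← exp_add, add_sub_cancel]

end HasQuadraticExpansion

theorem one_add_rpow_sub_sum_isBigO_pow (p : ℝ) (n : ℕ) :
    (fun y : ℝ => (1 + y) ^ p - ∑ i ∈ Finset.range n, Ring.choose p i * y ^ i)
      =O[𝓝 0] fun y => y ^ n := by
  have := (one_add_rpow_hasFPowerSeriesAt_zero (a := p)).isBigO_sub_partialSum_pow n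
  refine (this.congr_left fun y => ?_).trans (isBigO_of_le _ fun y => by simp)
  simp [FormalMultilinearSeries.partialSum, binomialSeries, mul_comm]

theorem choose_succ_eq_choose_mul_div {𝕜 : Type*} [Field 𝕜] [CharZero 𝕜] (a : 𝕜) (n : ℕ) :
    Ring.choose a (n + 1) = Ring.choose a n * (a - n) / (n + 1) := by
  have hn : (n : 𝕜) + 1 ≠ 0 := n.cast_add_one_ne_zero
  have hmul : ((n : 𝕜) + 1) * Ring.choose a (n + 1) = Ring.choose a n * (a - n) := by
    simpa [Nat.choose_succ_self_right] using Ring.choose_smul_choose a n.le_succ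
  rw [eq_div_iff hn, mul_comm, hmul]

theorem choose_two_eq_mul_div {𝕜 : Type*} [Field 𝕜] [CharZero 𝕜] (a : 𝕜) :
    Ring.choose a 2 = a * (a - 1) / 2 := by
  rw [choose_succ_eq_choose_mul_div, Ring.choose_one_right]
  norm_num

theorem choose_three_eq_mul_div {𝕜 : Type*} [Field 𝕜] [CharZero 𝕜] (a : 𝕜) :
    Ring.choose a 3 = a * (a - 1) * (a - 2) / 6 := by
  rw [choose_succ_eq_choose_mul_div, choose_two_eq_mul_div]
  push_cast
  ring

namespace HasQuadraticExpansion

theorem one_add_rpow_id (p : ℝ) :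
    HasQuadraticExpansion (𝓝 0) id (fun y => (1 + y) ^ p) 1 p (p * (p - 1) / 2) :=
  (one_add_rpow_sub_sum_isBigO_pow p 3).congr_left fun y => by
    simp [Finset.sum_range_succ, choose_two_eq_mul_div]

theorem one_add_mul_rpow_sub_one_div_id (k p : ℝ) :
    HasQuadraticExpansion (𝓝[≠] 0) id (fun y => ((1 + k * y) ^ p - 1) / y)
      (p * k) (p * (p - 1) / 2 * k ^ 2) (p * (p - 1) * (p - 2) / 6 * k ^ 3) := by
  have hk : Tendsto (fun y => k * y) (𝓝[≠] 0) (𝓝 0) :=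
    (Continuous.tendsto' (by fun_prop) 0 0 (mul_zero k)).mono_left nhdsWithin_le_nhds
  have hnum : (fun y => (1 + k * y) ^ p - ∑ i ∈ Finset.range 4, Ring.choose p i * (k * y) ^ i)
      =O[𝓝[≠] 0] fun y => y ^ 4 :=
    ((one_add_rpow_sub_sum_isBigO_pow p 4).comp_tendsto hk).trans
      (((isBigO_refl (fun y : ℝ => y ^ 4) _).const_mul_left (k ^ 4)).congr_left fun y => by
        simp only [Function.comp_apply, mul_pow])
  refine (hnum.mul (isBigO_refl (fun y : ℝ => y⁻¹) _)).congr' ?_ ?_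
  · filter_upwards [self_mem_nhdsWithin] with y (hy : y ≠ 0)
    simp only [Finset.sum_range_succ, Finset.range_one, Finset.sum_singleton,
      Ring.choose_zero_right', pow_zero, mul_one, Ring.choose_one_right', pow_one,
      choose_two_eq_mul_div, choose_three_eq_mul_div, id_eq]
    field_simp
    ring
  · filter_upwards [self_mem_nhdsWithin] with y (hy : y ≠ 0)
    simp only [id]
    field_simp

end HasQuadraticExpansion

theorem log_one_sub_add_self_isBigO_sq :
    (fun u : ℝ => log (1 - u) + u) =O[𝓝 0] fun u => u ^ 2 := by
  refine IsBigO.of_bound 2 ?_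
  filter_upwards [Metric.ball_mem_nhds (0 : ℝ) one_half_pos] with u hu
  have hu_half : |u| < 1 / 2 := by simpa using hu
  have hlog : |u + log (1 - u)| ≤ |u| ^ 2 / (1 - |u|) := by
    simpa [one_add_one_eq_two] using abs_log_sub_add_sum_range_le (hu_half.trans one_half_lt_one) 1
  rw [norm_eq_abs, norm_pow, norm_eq_abs, add_comm]
  refine hlog.trans ?_
  rw [div_le_iff₀ (by linarith)]
  nlinarith [sq_nonneg |u|]

/-! ### The Gaussian tail and the Mills ratio -/

/-- `∫_a^∞ u⁻ᵐ e^{-u²/2} du`, the integrals produced by repeated integration by parts of the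
Gaussian tail (`m = 0`). -/
noncomputable def gaussianTailInvMoment (m : ℕ) (a : ℝ) : ℝ :=
  ∫ u in Ioi a, u⁻¹ ^ m * exp (-u ^ 2 / 2)

theorem integrable_exp_neg_sq_div_two : Integrable fun u : ℝ => exp (-u ^ 2 / 2) :=
  (integrable_exp_neg_mul_sq one_half_pos).congr (.of_forall fun u => by ring_nf)

theorem integral_exp_neg_sq_div_two : ∫ u : ℝ, exp (-u ^ 2 / 2) = √(2 * π) := by
  convert integral_gaussian (1 / 2) using 4 <;> ring

theorem one_sub_stdNormalCDF (a : ℝ) :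
    1 - stdNormalCDF a = gaussianTailInvMoment 0 a / √(2 * π) := by
  have hpos : √(2 * π) ≠ 0 := by positivity
  have hsum := integral_add_compl (measurableSet_Iic (a := a)) integrable_exp_neg_sq_div_two
  rw [compl_Iic, integral_exp_neg_sq_div_two] at hsum
  simp only [stdNormalCDF, gaussianTailInvMoment, pow_zero, one_mul, integral_div]
  rw [eq_div_iff hpos, sub_mul, div_mul_cancel₀ _ hpos]
  linarith

theorem integrableOn_inv_pow_mul_exp_neg_sq (m : ℕ) {a : ℝ} (ha : 0 < a) :
    IntegrableOn (fun u : ℝ => u⁻¹ ^ m * exp (-u ^ 2 / 2)) (Ioi a) := by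
  refine integrable_exp_neg_sq_div_two.integrableOn.bdd_mul (c := a⁻¹ ^ m)
    (by fun_prop) ?_
  filter_upwards [ae_restrict_mem measurableSet_Ioi] with u (hu : a < u)
  have hu0 : 0 < u := ha.trans hu
  rw [norm_of_nonneg (by positivity)]
  gcongr

theorem gaussianTailInvMoment_nonneg (m : ℕ) {a : ℝ} (ha : 0 < a) :
    0 ≤ gaussianTailInvMoment m a :=
  setIntegral_nonneg measurableSet_Ioi fun u (hu : a < u) => by
    have := ha.trans hu
    positivity

theorem hasDerivAt_neg_inv_pow_mul_exp_neg_sq (m : ℕ) {u : ℝ} (hu : u ≠ 0) :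
    HasDerivAt (fun u : ℝ => -(u⁻¹ ^ (m + 1) * exp (-u ^ 2 / 2)))
      (u⁻¹ ^ m * exp (-u ^ 2 / 2) + (m + 1) * (u⁻¹ ^ (m + 2) * exp (-u ^ 2 / 2))) u := by
  have hexp : HasDerivAt (fun u : ℝ => exp (-u ^ 2 / 2)) (exp (-u ^ 2 / 2) * -u) u :=
    (((hasDerivAt_pow 2 u).neg.div_const 2).congr_deriv (by norm_num; ring)).exp
  refine (((hasDerivAt_inv hu).pow (m + 1)).mul hexp).neg.congr_deriv ?_
  simp only [Nat.cast_add, Nat.cast_one, add_tsub_cancel_right, inv_pow, mul_neg, neg_mul,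
    Pi.pow_apply, neg_add_rev, neg_neg]
  field_simp
  ring

theorem tendsto_inv_pow_mul_exp_neg_sq (m : ℕ) :
    Tendsto (fun u : ℝ => u⁻¹ ^ (m + 1) * exp (-u ^ 2 / 2)) atTop (𝓝 0) := by
  have hinv : Tendsto (fun u : ℝ => u⁻¹ ^ (m + 1)) atTop (𝓝 0) := by
    simpa using (tendsto_inv_atTop_zero (𝕜 := ℝ)).pow (m + 1)
  refine hinv.zero_mul_isBoundedUnder_le (isBoundedUnder_of ⟨1, fun u => ?_⟩)
  have : -u ^ 2 / 2 ≤ 0 := by linarith [sq_nonneg u]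
  simpa using this

theorem gaussianTailInvMoment_eq (m : ℕ) {a : ℝ} (ha : 0 < a) :
    gaussianTailInvMoment m a =
      a⁻¹ ^ (m + 1) * exp (-a ^ 2 / 2) - (m + 1) * gaussianTailInvMoment (m + 2) a := by
  have hint := integrableOn_inv_pow_mul_exp_neg_sq m ha
  have hint' := (integrableOn_inv_pow_mul_exp_neg_sq (m + 2) ha).const_mul (m + 1 : ℝ)
  have hftc := integral_Ioi_of_hasDerivAt_of_tendsto'
    (fun u (hu : a ≤ u) => hasDerivAt_neg_inv_pow_mul_exp_neg_sq m (ha.trans_le hu).ne')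
    (hint.add hint') (tendsto_inv_pow_mul_exp_neg_sq m).neg
  rw [integral_add hint hint', integral_const_mul] at hftc
  unfold gaussianTailInvMoment
  linarith

/-- The Mills ratio `(1 - Φ(a)) / φ(a)` of the standard normal distribution. -/
noncomputable def millsRatio (a : ℝ) : ℝ := (1 - stdNormalCDF a) * (√(2 * π) * exp (a ^ 2 / 2))

theorem abs_mul_millsRatio_sub_le {a : ℝ} (ha : 0 < a) :
    |a * millsRatio a - (1 - (a ^ 2)⁻¹ + 3 * (a ^ 2)⁻¹ ^ 2)| ≤ 15 * (a ^ 2)⁻¹ ^ 3 := by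
  have hrem_eq : a * millsRatio a - (1 - (a ^ 2)⁻¹ + 3 * (a ^ 2)⁻¹ ^ 2) =
      -(15 * (a * exp (a ^ 2 / 2) * gaussianTailInvMoment 6 a)) := by
    rw [millsRatio, one_sub_stdNormalCDF, gaussianTailInvMoment_eq 0 ha,
      gaussianTailInvMoment_eq 2 ha, gaussianTailInvMoment_eq 4 ha, neg_div, exp_neg]
    norm_num
    field_simp
    ring
  have hrem_le : a * exp (a ^ 2 / 2) * gaussianTailInvMoment 6 a ≤ (a ^ 2)⁻¹ ^ 3 := by
    have hnext := gaussianTailInvMoment_nonneg 8 ha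
    calc a * exp (a ^ 2 / 2) * gaussianTailInvMoment 6 a
        ≤ a * exp (a ^ 2 / 2) * (a⁻¹ ^ 7 * exp (-a ^ 2 / 2)) := by
          rw [gaussianTailInvMoment_eq 6 ha]
          gcongr
          norm_num
          exact hnext
      _ = (a ^ 2)⁻¹ ^ 3 := by
          rw [neg_div, exp_neg]
          field_simp
  have hnonneg := gaussianTailInvMoment_nonneg 6 ha
  rw [hrem_eq, abs_neg, abs_of_nonneg (by positivity)]
  gcongr

theorem hasQuadraticExpansion_mul_millsRatio :
    HasQuadraticExpansion atTop (fun a => (a ^ 2)⁻¹) (fun a => a * millsRatio a) 1 (-1) 3 := by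
  refine IsBigO.of_bound 15 ?_
  filter_upwards [eventually_gt_atTop 0] with a ha
  have := abs_mul_millsRatio_sub_le ha
  rw [norm_eq_abs, norm_of_nonneg (by positivity)]
  convert this using 2
  ring

/-! ### The threshold and the normalised tail -/

/-- The quantity `a / φ(a) = √(2π) a e^{a²/2}`, with `φ` the standard normal density: the norming
sequence `b` is characterised by `n = normalNorming (b n)`. -/
noncomputable def normalNorming (a : ℝ) : ℝ := √(2 * π) * a * exp (a ^ 2 / 2)

/-- The threshold `(c x + d)^{1/t}`, where `c = t B^{t-2}` and `d = B^t`, for the maximum whose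
`t`-th absolute power is compared with `c x + d`. -/
noncomputable def powerThreshold (t x B : ℝ) : ℝ := (t * B ^ (t - 2) * x + B ^ t) ^ (1 / t)

section Threshold

variable {t x B : ℝ}

theorem tendsto_inv_sq_atTop : Tendsto (fun B : ℝ => (B ^ 2)⁻¹) atTop (𝓝 0) :=
  tendsto_inv_atTop_zero.comp (tendsto_pow_atTop two_ne_zero)

theorem eventually_pos_one_add_mul_inv_sq (k : ℝ) : ∀ᶠ B : ℝ in atTop, 0 < 1 + k * (B ^ 2)⁻¹ := by
  have hlim : Tendsto (fun B : ℝ => 1 + k * (B ^ 2)⁻¹) atTop (𝓝 1) := by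
    simpa using (tendsto_inv_sq_atTop.const_mul k).const_add 1
  exact hlim.eventually_const_lt one_pos

theorem mul_rpow_sub_two_mul_add_rpow (hB : 0 < B) :
    t * B ^ (t - 2) * x + B ^ t = B ^ t * (1 + t * x * (B ^ 2)⁻¹) := by
  rw [rpow_sub hB, rpow_two]
  field_simp
  ring

theorem eventually_pos_mul_rpow_sub_two_mul_add_rpow (t x : ℝ) :
    ∀ᶠ B : ℝ in atTop, 0 < t * B ^ (t - 2) * x + B ^ t := by
  filter_upwards [eventually_gt_atTop 0, eventually_pos_one_add_mul_inv_sq (t * x)] with B hB hw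
  rw [mul_rpow_sub_two_mul_add_rpow hB]
  positivity

theorem powerThreshold_eq (ht : t ≠ 0) (hB : 0 < B) (hw : 0 < 1 + t * x * (B ^ 2)⁻¹) :
    powerThreshold t x B = B * (1 + t * x * (B ^ 2)⁻¹) ^ (1 / t) := by
  rw [powerThreshold, mul_rpow_sub_two_mul_add_rpow hB, mul_rpow (by positivity) hw.le,
    ← rpow_mul hB.le, mul_one_div_cancel ht, rpow_one]

theorem eventually_powerThreshold_eq (ht : t ≠ 0) (x : ℝ) :
    ∀ᶠ B in atTop, powerThreshold t x B = B * (1 + t * x * (B ^ 2)⁻¹) ^ (1 / t) := by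
  filter_upwards [eventually_gt_atTop 0, eventually_pos_one_add_mul_inv_sq (t * x)] with B hB hw
  exact powerThreshold_eq ht hB hw

theorem powerThreshold_sq (ht : t ≠ 0) (hB : 0 < B) (hw : 0 < 1 + t * x * (B ^ 2)⁻¹) :
    powerThreshold t x B ^ 2 = B ^ 2 * (1 + t * x * (B ^ 2)⁻¹) ^ (2 / t) := by
  rw [powerThreshold_eq ht hB hw, mul_pow, ← rpow_mul_natCast hw.le]
  congr 2
  push_cast
  ring

theorem hasQuadraticExpansion_one_add_mul_inv_sq_rpow (k p : ℝ) :
    HasQuadraticExpansion atTop (fun B => (B ^ 2)⁻¹) (fun B => (1 + k * (B ^ 2)⁻¹) ^ p)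
      1 (p * k) (p * (p - 1) / 2 * k ^ 2) := by
  have hlin : HasQuadraticExpansion atTop (fun B : ℝ => (B ^ 2)⁻¹) (fun B => k * (B ^ 2)⁻¹)
      0 k 0 :=
    (HasQuadraticExpansion.polynomial _ _ 0 k 0).congr' (.of_forall fun B => by ring)
  exact ((HasQuadraticExpansion.one_add_rpow_id p).comp (hlin.tendsto tendsto_inv_sq_atTop) hlin
    tendsto_inv_sq_atTop).congr_coeff rfl rfl (by ring)

theorem tendsto_powerThreshold_atTop (ht : t ≠ 0) (x : ℝ) :
    Tendsto (powerThreshold t x) atTop atTop := by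
  have hfactor := (hasQuadraticExpansion_one_add_mul_inv_sq_rpow (t * x) (1 / t)).tendsto
    tendsto_inv_sq_atTop
  exact (tendsto_id.atTop_mul_pos one_pos hfactor).congr'
    ((eventually_powerThreshold_eq ht x).mono fun B hB => hB.symm)

theorem hasQuadraticExpansion_inv_powerThreshold_sq (ht : t ≠ 0) (x : ℝ) :
    HasQuadraticExpansion atTop (fun B => (B ^ 2)⁻¹) (fun B => (powerThreshold t x B ^ 2)⁻¹)
      0 1 (-(2 * x)) := by
  have hprod := (HasQuadraticExpansion.polynomial atTop (fun B : ℝ => (B ^ 2)⁻¹) 0 1 0).mul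
    (hasQuadraticExpansion_one_add_mul_inv_sq_rpow (t * x) (-(2 / t))) tendsto_inv_sq_atTop
  refine (hprod.congr' ?_).congr_coeff (by ring) (by ring) (by field_simp; ring)
  filter_upwards [eventually_gt_atTop 0, eventually_pos_one_add_mul_inv_sq (t * x)] with B hB hw
  rw [powerThreshold_sq ht hB hw, mul_inv, rpow_neg hw.le]
  ring

theorem hasQuadraticExpansion_powerThreshold_mul_millsRatio (ht : t ≠ 0) (x : ℝ) :
    HasQuadraticExpansion atTop (fun B => (B ^ 2)⁻¹)
      (fun B => powerThreshold t x B * millsRatio (powerThreshold t x B)) 1 (-1) (3 + 2 * x) :=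
  (hasQuadraticExpansion_mul_millsRatio.comp (tendsto_powerThreshold_atTop ht x)
    (hasQuadraticExpansion_inv_powerThreshold_sq ht x) tendsto_inv_sq_atTop).congr_coeff
    rfl (by ring) (by ring)

theorem hasQuadraticExpansion_div_powerThreshold (ht : t ≠ 0) (x : ℝ) :
    HasQuadraticExpansion atTop (fun B => (B ^ 2)⁻¹) (fun B => B / powerThreshold t x B)
      1 (-x) ((1 + t) / 2 * x ^ 2) := by
  refine ((hasQuadraticExpansion_one_add_mul_inv_sq_rpow (t * x) (-(1 / t))).congr' ?_).congr_coeff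
    rfl (by field_simp) (by field_simp; ring)
  filter_upwards [eventually_gt_atTop 0, eventually_pos_one_add_mul_inv_sq (t * x)] with B hB hw
  rw [powerThreshold_eq ht hB hw, rpow_neg hw.le, div_mul_cancel_left₀ hB.ne']

theorem hasQuadraticExpansion_exp_sq_sub_powerThreshold_sq (ht : t ≠ 0) (x : ℝ) :
    HasQuadraticExpansion atTop (fun B => (B ^ 2)⁻¹)
      (fun B => exp ((B ^ 2 - powerThreshold t x B ^ 2) / 2)) (exp (-x))
      (-(exp (-x) * ((2 - t) / 2 * x ^ 2)))
      (exp (-x) * ((t - 2) ^ 2 / 8 * x ^ 4 - (2 - t) * (2 - 2 * t) / 6 * x ^ 3)) := by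
  have hne : Tendsto (fun B : ℝ => (B ^ 2)⁻¹) atTop (𝓝[≠] 0) :=
    tendsto_nhdsWithin_iff.2 ⟨tendsto_inv_sq_atTop,
      (eventually_gt_atTop 0).mono fun B hB => (inv_pos.2 (pow_pos hB 2)).ne'⟩
  have hquot := (HasQuadraticExpansion.one_add_mul_rpow_sub_one_div_id (t * x) (2 / t)).comp_tendsto
    hne
  refine ((((hquot.const_mul (-(1 / 2))).congr_coeff (b₀ := -x) (by field_simp) rfl rfl).exp
    tendsto_inv_sq_atTop).congr' ?_).congr_coeff rfl (by field_simp) (by field_simp; ring)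
  filter_upwards [eventually_gt_atTop 0, eventually_pos_one_add_mul_inv_sq (t * x)] with B hB hw
  rw [powerThreshold_sq ht hB hw]
  simp only [Function.comp_apply, div_inv_eq_mul]
  congr 1
  ring

end Threshold

theorem normalNorming_mul_one_sub_stdNormalCDF {a : ℝ} (ha : a ≠ 0) (B : ℝ) :
    normalNorming B * (1 - stdNormalCDF a) =
      a * millsRatio a * (B / a) * exp ((B ^ 2 - a ^ 2) / 2) := by
  rw [normalNorming, millsRatio, sub_div, exp_sub]
  field_simp

theorem hasQuadraticExpansion_normalNorming_mul_tail {t : ℝ} (ht : t ≠ 0) (x : ℝ) :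
    HasQuadraticExpansion atTop (fun B => (B ^ 2)⁻¹)
      (fun B => normalNorming B * (1 - stdNormalCDF (powerThreshold t x B)))
      (exp (-x)) (-(exp (-x) * (1 + x + (2 - t) / 2 * x ^ 2)))
      (exp (-x) * (3 + 3 * x + 3 / 2 * x ^ 2 + (2 - t) * (2 * t + 1) / 6 * x ^ 3 +
        (t - 2) ^ 2 / 8 * x ^ 4)) := by
  have hprod := ((hasQuadraticExpansion_powerThreshold_mul_millsRatio ht x).mul
    (hasQuadraticExpansion_div_powerThreshold ht x) tendsto_inv_sq_atTop).mul
    (hasQuadraticExpansion_exp_sq_sub_powerThreshold_sq ht x) tendsto_inv_sq_atTop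
  refine (hprod.congr' ?_).congr_coeff (by ring) (by ring) (by ring)
  filter_upwards [(tendsto_powerThreshold_atTop ht x).eventually_ne_atTop 0] with B hB
  exact (normalNorming_mul_one_sub_stdNormalCDF hB B).symm

theorem inv_normalNorming_isBigO :
    (fun B => (normalNorming B)⁻¹) =O[atTop] fun B => (B ^ 2)⁻¹ ^ 3 := by
  have hexp : (fun B : ℝ => (B ^ 2 / 2) ^ 3) =O[atTop] fun B => exp (B ^ 2 / 2) :=
    (isLittleO_pow_exp_atTop.comp_tendsto
      ((tendsto_pow_atTop two_ne_zero).atTop_div_const two_pos)).isBigO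
  have hpow : (fun B : ℝ => (B ^ 2) ^ 3) =O[atTop] fun B => exp (B ^ 2 / 2) :=
    (hexp.const_mul_left 8).congr_left fun B => by ring
  have hnorming : (fun B => exp (B ^ 2 / 2)) =O[atTop] normalNorming := by
    refine IsBigO.of_bound 1 ?_
    filter_upwards [eventually_ge_atTop 1] with B hB
    have hsqrt : 1 ≤ √(2 * π) := one_le_sqrt.2 (by linarith [two_le_pi])
    rw [one_mul, normalNorming, norm_of_nonneg (by positivity), norm_of_nonneg (by positivity)]
    exact le_mul_of_one_le_left (exp_pos _).le (one_le_mul_of_one_le_of_one_le hsqrt hB)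
  refine ((hpow.trans hnorming).inv_rev ?_).congr_right fun B => (inv_pow _ _).symm
  filter_upwards [eventually_gt_atTop 0] with B hB hzero
  exact absurd hzero (by positivity)

/-! ### Powers of the distribution function -/

theorem isBigO_inv_natCast_of_natCast_mul {u : ℕ → ℝ}
    (hu : (fun n : ℕ => (n : ℝ) * u n) =O[atTop] fun _ => (1 : ℝ)) :
    u =O[atTop] fun n : ℕ => (n : ℝ)⁻¹ := by
  refine (hu.mul (isBigO_refl (fun n : ℕ => (n : ℝ)⁻¹) atTop)).congr' ?_ ?_
  · filter_upwards [eventually_ne_atTop 0] with n hn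
    field_simp
  · exact .of_forall fun n => one_mul _

theorem pow_self_isBigO {u : ℕ → ℝ} (hu : Tendsto u atTop (𝓝 0)) :
    (fun n => u n ^ n) =O[atTop] u := by
  refine IsBigO.of_bound 1 ?_
  filter_upwards [hu.eventually (Metric.closedBall_mem_nhds 0 one_pos), eventually_ne_atTop 0]
    with n hn hn0
  rw [one_mul, norm_pow]
  exact pow_le_of_le_one (norm_nonneg _) (by simpa using hn) hn0

namespace HasQuadraticExpansion

variable {h u : ℕ → ℝ} {a₀ a₁ a₂ : ℝ}

theorem natCast_mul_log_one_sub (hh : Tendsto h atTop (𝓝 0))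
    (hn : (fun n : ℕ => (n : ℝ)⁻¹) =O[atTop] fun n => h n ^ 3)
    (hu : HasQuadraticExpansion atTop h (fun n => (n : ℝ) * u n) a₀ a₁ a₂) :
    HasQuadraticExpansion atTop h (fun n => (n : ℝ) * log (1 - u n)) (-a₀) (-a₁) (-a₂) := by
  have hnu := (hu.tendsto hh).isBigO_one ℝ
  have hu_inv := isBigO_inv_natCast_of_natCast_mul hnu
  have hu_zero := hu_inv.trans_tendsto tendsto_inv_atTop_nhds_zero_nat
  have hsq : (fun n : ℕ => (n : ℝ) * u n ^ 2) =O[atTop] fun n => h n ^ 3 :=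
    (hnu.mul (hu_inv.trans hn)).congr (fun n => by ring) fun n => one_mul _
  have hlog : (fun n : ℕ => (n : ℝ) * (log (1 - u n) + u n)) =O[atTop]
      fun n : ℕ => (n : ℝ) * u n ^ 2 :=
    (isBigO_refl _ _).mul (log_one_sub_add_self_isBigO_sq.comp_tendsto hu_zero)
  exact ((hu.const_mul (-1)).congr_coeff (by ring) (by ring) (by ring)).add_isBigO
    ((hlog.trans hsq).congr_left fun n => by ring)

theorem one_sub_pow_sub_pow (hh : Tendsto h atTop (𝓝 0))
    (hn : (fun n : ℕ => (n : ℝ)⁻¹) =O[atTop] fun n => h n ^ 3)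
    (hu : HasQuadraticExpansion atTop h (fun n => (n : ℝ) * u n) a₀ a₁ a₂) :
    HasQuadraticExpansion atTop h (fun n => (1 - u n) ^ n - u n ^ n)
      (exp (-a₀)) (-(exp (-a₀) * a₁)) (exp (-a₀) * (a₁ ^ 2 / 2 - a₂)) := by
  have hu_inv := isBigO_inv_natCast_of_natCast_mul ((hu.tendsto hh).isBigO_one ℝ)
  have hu_zero := hu_inv.trans_tendsto tendsto_inv_atTop_nhds_zero_nat
  have hpow : HasQuadraticExpansion atTop h (fun n => (1 - u n) ^ n)
      (exp (-a₀)) (-(exp (-a₀) * a₁)) (exp (-a₀) * (a₁ ^ 2 / 2 - a₂)) := by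
    refine (((natCast_mul_log_one_sub hh hn hu).exp hh).congr' ?_).congr_coeff
      rfl (by ring) (by ring)
    filter_upwards [hu_zero.eventually_lt_const one_pos] with n hn1
    rw [exp_nat_mul, exp_log (sub_pos.2 hn1)]
  have hrem : (fun n => u n ^ n) =O[atTop] fun n => h n ^ 3 :=
    (pow_self_isBigO hu_zero).trans (hu_inv.trans hn)
  exact hpow.add_isBigO (hrem.neg_left.congr_left fun n => by ring)

end HasQuadraticExpansion

theorem normalNorming_monotoneOn : MonotoneOn normalNorming (Ici 0) := by
  intro a ha b hb hab
  have := mem_Ici.1 ha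
  have := mem_Ici.1 hb
  unfold normalNorming
  gcongr

theorem normalNorming_eq_of_sq_eq {B y : ℝ} (hB : 0 ≤ B) (hy : 0 ≤ y)
    (h : 2 * π * B ^ 2 * exp (B ^ 2) = y ^ 2) : normalNorming B = y := by
  have hnn : 0 ≤ normalNorming B := by unfold normalNorming; positivity
  rw [← sq_eq_sq₀ hnn hy, ← h, normalNorming, mul_pow, mul_pow, sq_sqrt (by positivity),
    ← exp_nat_mul]
  congr 2
  push_cast
  ring

theorem tendsto_atTop_of_normalNorming {α : Type*} {l : Filter α} {b : α → ℝ}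
    (hpos : ∀ᶠ x in l, 0 < b x) (hb : Tendsto (fun x => normalNorming (b x)) l atTop) :
    Tendsto b l atTop := by
  refine tendsto_atTop.2 fun M => ?_
  filter_upwards [hpos, hb.eventually_gt_atTop (normalNorming M)] with x hx hM
  by_contra! hlt
  exact hM.not_ge (normalNorming_monotoneOn hx.le (hx.trans hlt).le hlt.le)

theorem hasQuadraticExpansion_stdNormalCDF_pow_sub_pow {t : ℝ} (ht : t ≠ 0) (x : ℝ) {b : ℕ → ℝ}
    (hb_top : Tendsto b atTop atTop) (hb : ∀ᶠ n in atTop, normalNorming (b n) = n) :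
    HasQuadraticExpansion atTop (fun n => (b n ^ 2)⁻¹)
      (fun n => stdNormalCDF (powerThreshold t x (b n)) ^ n -
        (1 - stdNormalCDF (powerThreshold t x (b n))) ^ n)
      (gumbel x) (gumbel x * exp (-x) * (1 + x + (2 - t) / 2 * x ^ 2))
      (gumbel x * exp (-x) *
        (-(3 + 3 * x + 3 / 2 * x ^ 2 + (2 - t) * (2 * t + 1) / 6 * x ^ 3 +
          (t - 2) ^ 2 / 8 * x ^ 4 -
          exp (-x) / 2 * (1 + x + (2 - t) / 2 * x ^ 2) ^ 2))) := by
  have hgauge : Tendsto (fun n => (b n ^ 2)⁻¹) atTop (𝓝 0) := tendsto_inv_sq_atTop.comp hb_top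
  have hinv : (fun n : ℕ => (n : ℝ)⁻¹) =O[atTop] fun n => (b n ^ 2)⁻¹ ^ 3 :=
    (inv_normalNorming_isBigO.comp_tendsto hb_top).congr' (hb.mono fun n hn => congrArg _ hn) .rfl
  have htail : HasQuadraticExpansion atTop (fun n => (b n ^ 2)⁻¹)
      (fun n => (n : ℝ) * (1 - stdNormalCDF (powerThreshold t x (b n)))) _ _ _ :=
    ((hasQuadraticExpansion_normalNorming_mul_tail ht x).comp_tendsto hb_top).congr'
      (hb.mono fun n hn => by simp only [Function.comp_apply, hn])
  refine ((htail.one_sub_pow_sub_pow hgauge hinv).congr' (.of_forall fun n => ?_)).congr_coeff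
    rfl ?_ ?_
  · simp only [sub_sub_cancel]
  all_goals
    rw [gumbel]
    ring

theorem powered_extremes_df_higher_order_expansion_t_ne_two_general
    (b : ℕ → ℝ)
    (hb : ∀ n : ℕ, 1 ≤ n → 0 < b n ∧
      2 * Real.pi * (b n) ^ 2 * Real.exp ((b n) ^ 2) = (n : ℝ) ^ 2)
    (t : ℝ) (ht : t ≠ 0) (x : ℝ)
    (c d g F : ℕ → ℝ)
    (hc : ∀ n : ℕ, c n = t * b n ^ (t - 2))
    (hd : ∀ n : ℕ, d n = b n ^ t)
    (hg : ∀ n : ℕ, g n = (c n * x + d n) ^ (1 / t))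
    (hF : ∀ n : ℕ, F n = stdNormalCDF (g n) ^ n - (1 - stdNormalCDF (g n)) ^ n) :
    ∃ C > (0 : ℝ), ∃ N : ℕ, ∀ n : ℕ, N ≤ n →
      0 < c n * x + d n ∧
      |F n - gumbel x -
        gumbel x * Real.exp (-x) / (b n) ^ 2 * (1 + x + (2 - t) / 2 * x ^ 2) -
        gumbel x * Real.exp (-x) / (b n) ^ 4 *
          (-(3 + 3 * x + 3 / 2 * x ^ 2 + (2 - t) * (2 * t + 1) / 6 * x ^ 3 +
            (t - 2) ^ 2 / 8 * x ^ 4 -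
            Real.exp (-x) / 2 * (1 + x + (2 - t) / 2 * x ^ 2) ^ 2))|
      ≤ C / (b n) ^ 6 := by
  have hb_pos : ∀ᶠ n in atTop, 0 < b n := (eventually_ge_atTop 1).mono fun n hn => (hb n hn).1
  have hb_norming : ∀ᶠ n : ℕ in atTop, normalNorming (b n) = n :=
    (eventually_ge_atTop 1).mono fun n hn =>
      normalNorming_eq_of_sq_eq (hb n hn).1.le n.cast_nonneg (hb n hn).2
  have hb_top : Tendsto b atTop atTop := tendsto_atTop_of_normalNorming hb_pos
    (tendsto_natCast_atTop_atTop.congr' (hb_norming.mono fun n hn => hn.symm))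
  obtain ⟨C, hC, hbound⟩ :=
    (hasQuadraticExpansion_stdNormalCDF_pow_sub_pow ht x hb_top hb_norming).exists_pos
  have hthreshold := hb_top.eventually (eventually_pos_mul_rpow_sub_two_mul_add_rpow t x)
  obtain ⟨N, hN⟩ := eventually_atTop.1 (hbound.bound.and (hthreshold.and hb_pos))
  refine ⟨C, hC, N, fun n hn => ?_⟩
  obtain ⟨hle, hcd, hbn⟩ := hN n hn
  refine ⟨by rwa [hc, hd], ?_⟩
  have hg_eq : g n = powerThreshold t x (b n) := by rw [hg, hc, hd, powerThreshold]
  have hgauge : C * ‖(b n ^ 2)⁻¹ ^ 3‖ = C / b n ^ 6 := by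
    rw [norm_of_nonneg (by positivity)]
    ring
  beta_reduce at hle
  rw [norm_eq_abs, hgauge] at hle
  convert hle using 2
  rw [hF, hg_eq]
  ring

/-- Theorem 2.1, `t ≠ 2`: With `b_n` the unique positive solution of
`2π b_n² exp(b_n²) = n²`, `c_n = t b_n^{t−2}`, `d_n = b_n^t` (for `t > 0`, `t ≠ 2`),
`g_n = (c_n x + d_n)^{1/t}` and `F_n(x) = Φ(g_n)^n − (1 − Φ(g_n))^n`
(which equals `P(|M_n|^t ≤ c_n x + d_n)`):
`F_n(x) = Λ(x) + b_n^{−2} Λ(x) e^{−x}(k₁ + b_n^{−2} k₂ + O(b_n^{−4}))`, with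
`k₁ = 1 + x + ((2−t)/2)x²` and
`k₂ = −(3 + 3x + (3/2)x² + ((2−t)(2t+1)/6)x³ + ((t−2)²/8)x⁴
  − (e^{−x}/2)(1 + x + ((2−t)/2)x²)²)`. -/
theorem powered_extremes_df_higher_order_expansion_t_ne_two
    (b : ℕ → ℝ)
    (hb : ∀ n : ℕ, 1 ≤ n → 0 < b n ∧
      2 * Real.pi * (b n) ^ 2 * Real.exp ((b n) ^ 2) = (n : ℝ) ^ 2)
    (t : ℝ) (ht : 0 < t) (ht2 : t ≠ 2) (x : ℝ)
    (c d g F : ℕ → ℝ)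
    (hc : ∀ n : ℕ, c n = t * b n ^ (t - 2))
    (hd : ∀ n : ℕ, d n = b n ^ t)
    (hg : ∀ n : ℕ, g n = (c n * x + d n) ^ (1 / t))
    (hF : ∀ n : ℕ, F n = stdNormalCDF (g n) ^ n - (1 - stdNormalCDF (g n)) ^ n) :
    ∃ C > (0 : ℝ), ∃ N : ℕ, ∀ n : ℕ, N ≤ n →
      0 < c n * x + d n ∧
      |F n - gumbel x -
        gumbel x * Real.exp (-x) / (b n) ^ 2 * (1 + x + (2 - t) / 2 * x ^ 2) -
        gumbel x * Real.exp (-x) / (b n) ^ 4 *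
          (-(3 + 3 * x + 3 / 2 * x ^ 2 + (2 - t) * (2 * t + 1) / 6 * x ^ 3 +
            (t - 2) ^ 2 / 8 * x ^ 4 -
            Real.exp (-x) / 2 * (1 + x + (2 - t) / 2 * x ^ 2) ^ 2))|
      ≤ C / (b n) ^ 6 := by
  exact powered_extremes_df_higher_order_expansion_t_ne_two_general b hb t ht.ne' x c d g F hc hd
    hg hF
end

section
/- Fix x ∈ ℝ, and let F_n(x) = Φ(h_n)^{n} − (1 − Φ(h_n))^{n} where h_n = (c_n x + d_n)^{1/2}, with c_n = 2 − 2b_n^{−2} and d_n = b_n² − 2b_n^{−2}, defined for n large enough that c_n x + d_n > 0; F_n(x) equals the probability P(M_n² ≤ c_n x + d_n) for the maximum M_n of n independent standard normal random variables. Then as n → ∞, F_n(x) = Λ(x) + b_n^{−4} Λ(x) e^{−x} ( k₁ + b_n^{−2} k₂ + O(b_n^{−4}) ), where k₁ = −(7/2 + 3x + x²) and k₂ = 43/3 + 14x + 6x² + (4/3) x³; that is, there exist C > 0 and N such that for all n ≥ N, |F_n(x) − Λ(x) − b_n^{−4} Λ(x) e^{−x} k₁ − b_n^{−6} Λ(x)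 e^{−x} k₂| ≤ C b_n^{−8}. -/
open Real Filter Topology

/-! Write `s = b_n⁻²`. The equation defining `b_n` says exactly `n φ(b_n) = b_n`, so Mills'
asymptotic series turns `n (1 - Φ(h_n))` into a function of `s` alone, up to `O(s⁴)`; its Taylor
polynomial is `e⁻ˣ (1 - k₁ s² - k₂ s³)`. Finally `Φⁿ - (1 - Φ)ⁿ = exp (-n (1 - Φ)) + O(1/n)` at
`h_n`, and `1/n` is smaller than every power of `s`. -/

open Asymptotics ProbabilityTheory MeasureTheory
open scoped Nat

section CubicExpansion

variable {α : Type*} {l : Filter α} {s f g : α → ℝ} {a₀ a₁ a₂ a₃ b₀ b₁ b₂ b₃ : ℝ}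

/-- `f = a₀ + a₁ s + a₂ s² + a₃ s³ + O(s⁴)` along the filter `l`. The coefficients are separate
arguments so that sums, products and compositions produce explicit ones. Here `s` is a function
rather than a variable, so that both Taylor expansions at `0` (`l = 𝓝 0`, `s = id`) and expansions
of sequences in powers of an infinitesimal are covered. -/
def HasCubicExpansion (l : Filter α) (s f : α → ℝ) (a₀ a₁ a₂ a₃ : ℝ) : Prop :=
  (fun i => f i - (a₀ + a₁ * s i + a₂ * s i ^ 2 + a₃ * s i ^ 3)) =O[l] fun i => s i ^ 4

theorem isBigO_pow_mul_comp_of_continuous {p : ℝ → ℝ} (hp : Continuous p)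
    (hs : Tendsto s l (𝓝 0)) (k : ℕ) :
    (fun i => s i ^ k * p (s i)) =O[l] fun i => s i ^ k := by
  simpa using (isBigO_refl (fun i => s i ^ k) l).mul (((hp.tendsto 0).comp hs).isBigO_one ℝ)

namespace HasCubicExpansion

theorem of_eq (h : ∀ i, f i = a₀ + a₁ * s i + a₂ * s i ^ 2 + a₃ * s i ^ 3) :
    HasCubicExpansion l s f a₀ a₁ a₂ a₃ := by
  simp [HasCubicExpansion, h, isBigO_zero]

theorem tendsto (hf : HasCubicExpansion l s f a₀ a₁ a₂ a₃) (hs : Tendsto s l (𝓝 0)) :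
    Tendsto f l (𝓝 a₀) := by
  have hrem : Tendsto (fun i => f i - (a₀ + a₁ * s i + a₂ * s i ^ 2 + a₃ * s i ^ 3)) l (𝓝 0) :=
    hf.trans_tendsto (by simpa using hs.pow 4)
  have hpoly : Tendsto (fun i => a₀ + a₁ * s i + a₂ * s i ^ 2 + a₃ * s i ^ 3) l (𝓝 a₀) := by
    have hcont : Continuous fun t : ℝ => a₀ + a₁ * t + a₂ * t ^ 2 + a₃ * t ^ 3 := by fun_prop
    simpa [Function.comp_def] using (hcont.tendsto 0).comp hs
  simpa using hrem.add hpoly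

theorem isBigO_one (hf : HasCubicExpansion l s f a₀ a₁ a₂ a₃) (hs : Tendsto s l (𝓝 0)) :
    f =O[l] fun _ => (1 : ℝ) :=
  (hf.tendsto hs).isBigO_one ℝ

theorem isBigO_self (hf : HasCubicExpansion l s f 0 a₁ a₂ a₃) (hs : Tendsto s l (𝓝 0)) :
    f =O[l] s := by
  have hrem : (fun i => f i - (0 + a₁ * s i + a₂ * s i ^ 2 + a₃ * s i ^ 3)) =O[l] s := by
    refine hf.trans ?_
    refine (isBigO_pow_mul_comp_of_continuous (continuous_pow 3) hs 1).congr ?_ ?_ <;>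
      intro i <;> ring
  have hpoly : (fun i => s i ^ 1 * (a₁ + a₂ * s i + a₃ * s i ^ 2)) =O[l] fun i => s i ^ 1 :=
    isBigO_pow_mul_comp_of_continuous (p := fun t => a₁ + a₂ * t + a₃ * t ^ 2) (by fun_prop) hs 1
  exact (hrem.add (hpoly.congr_right fun i => pow_one _)).congr_left fun i => by ring

theorem add_isBigO (hf : HasCubicExpansion l s f a₀ a₁ a₂ a₃)
    (hg : (fun i => g i - f i) =O[l] fun i => s i ^ 4) :
    HasCubicExpansion l s g a₀ a₁ a₂ a₃ :=
  (IsBigO.add hg hf).congr_left fun i => by ring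

theorem comp_tendsto {F : ℝ → ℝ} (hF : HasCubicExpansion (𝓝 0) id F a₀ a₁ a₂ a₃)
    (hs : Tendsto s l (𝓝 0)) : HasCubicExpansion l s (fun i => F (s i)) a₀ a₁ a₂ a₃ :=
  IsBigO.comp_tendsto hF hs

theorem add (hf : HasCubicExpansion l s f a₀ a₁ a₂ a₃) (hg : HasCubicExpansion l s g b₀ b₁ b₂ b₃) :
    HasCubicExpansion l s (fun i => f i + g i) (a₀ + b₀) (a₁ + b₁) (a₂ + b₂) (a₃ + b₃) :=
  (IsBigO.add hf hg).congr_left fun i => by ring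

theorem const_mul (c : ℝ) (hf : HasCubicExpansion l s f a₀ a₁ a₂ a₃) :
    HasCubicExpansion l s (fun i => c * f i) (c * a₀) (c * a₁) (c * a₂) (c * a₃) :=
  (hf.const_mul_left c).congr_left fun i => by ring

theorem mul (hf : HasCubicExpansion l s f a₀ a₁ a₂ a₃) (hg : HasCubicExpansion l s g b₀ b₁ b₂ b₃)
    (hs : Tendsto s l (𝓝 0)) :
    HasCubicExpansion l s (fun i => f i * g i) (a₀ * b₀) (a₀ * b₁ + a₁ * b₀)
      (a₀ * b₂ + a₁ * b₁ + a₂ * b₀) (a₀ * b₃ + a₁ * b₂ + a₂ * b₁ + a₃ * b₀) := by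
  set P : α → ℝ := fun i => a₀ + a₁ * s i + a₂ * s i ^ 2 + a₃ * s i ^ 3 with hP
  set Q : α → ℝ := fun i => b₀ + b₁ * s i + b₂ * s i ^ 2 + b₃ * s i ^ 3 with hQ
  have hPbdd : P =O[l] fun _ => (1 : ℝ) :=
    HasCubicExpansion.isBigO_one (of_eq fun i => rfl : HasCubicExpansion l s P a₀ a₁ a₂ a₃) hs
  have hleft : (fun i => (f i - P i) * g i) =O[l] fun i => s i ^ 4 := by
    simpa using IsBigO.mul hf (hg.isBigO_one hs)
  have hright : (fun i => P i * (g i - Q i)) =O[l] fun i => s i ^ 4 := by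
    simpa using hPbdd.mul hg
  have htrunc := isBigO_pow_mul_comp_of_continuous (p := fun t =>
    (a₁ * b₃ + a₂ * b₂ + a₃ * b₁) + (a₂ * b₃ + a₃ * b₂) * t + a₃ * b₃ * t ^ 2)
    (by fun_prop) hs 4
  refine ((hleft.add hright).add htrunc).congr_left fun i => ?_
  simp only [hP, hQ]
  ring

theorem comp {F : ℝ → ℝ} {c₀ c₁ c₂ c₃ : ℝ} (hF : HasCubicExpansion (𝓝 0) id F c₀ c₁ c₂ c₃)
    (hf : HasCubicExpansion l s f 0 a₁ a₂ a₃) (hs : Tendsto s l (𝓝 0)) :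
    HasCubicExpansion l s (fun i => F (f i)) c₀ (c₁ * a₁) (c₁ * a₂ + c₂ * a₁ ^ 2)
      (c₁ * a₃ + 2 * c₂ * a₁ * a₂ + c₃ * a₁ ^ 3) := by
  have hrem : (fun i => F (f i) - (c₀ + c₁ * f i + c₂ * f i ^ 2 + c₃ * f i ^ 3))
      =O[l] fun i => s i ^ 4 :=
    (hF.comp_tendsto (hf.tendsto hs)).trans ((hf.isBigO_self hs).pow 4)
  have hconst : HasCubicExpansion l s (fun _ => c₀) c₀ 0 0 0 := of_eq fun i => by ring
  have hsq := hf.mul hf hs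
  have hpoly := ((hconst.add (hf.const_mul c₁)).add (hsq.const_mul c₂)).add
    ((hsq.mul hf hs).const_mul c₃)
  have hcomp := hpoly.add_isBigO (g := fun i => F (f i)) (hrem.congr_left fun i => by ring)
  convert hcomp using 1 <;> ring

end HasCubicExpansion

theorem hasCubicExpansion_exp : HasCubicExpansion (𝓝 0) id Real.exp 1 1 (1 / 2) (1 / 6) := by
  refine (Real.exp_sub_sum_range_isBigO_pow 4).congr_left fun t => ?_
  simp only [Finset.sum_range_succ, Finset.sum_range_zero, Nat.factorial, id]
  push_cast
  ring

theorem ring_choose_succ {K : Type*} [Field K] [CharZero K] (a : K) (k : ℕ) :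
    Ring.choose a (k + 1) = Ring.choose a k * (a - k) / (k + 1) := by
  simp only [Ring.choose_eq_smul, descPochhammer_succ_right, Polynomial.smeval_mul,
    Polynomial.smeval_sub, Polynomial.smeval_X, Polynomial.smeval_natCast, Nat.factorial_succ,
    Nat.cast_mul, Nat.cast_succ, pow_one, pow_zero, nsmul_eq_mul, mul_one, smul_eq_mul]
  field_simp

theorem hasCubicExpansion_one_add_rpow (a : ℝ) :
    HasCubicExpansion (𝓝 0) id (fun t => (1 + t) ^ a) 1 a (a * (a - 1) / 2)
      (a * (a - 1) * (a - 2) / 6) := by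
  have hseries := (Real.one_add_rpow_hasFPowerSeriesAt_zero (a := a)).isBigO_sub_partialSum_pow 4
  refine (hseries.congr_left fun t => ?_).trans (isBigO_of_le _ fun t => by simp)
  have hpartial : (binomialSeries ℝ a).partialSum 4 t =
      1 + a * t + a * (a - 1) / 2 * t ^ 2 + a * (a - 1) * (a - 2) / 6 * t ^ 3 := by
    simp only [FormalMultilinearSeries.partialSum, binomialSeries,
      FormalMultilinearSeries.apply_eq_prod_smul_coeff, FormalMultilinearSeries.coeff_ofScalars,
      Finset.prod_const, Finset.card_univ, Fintype.card_fin, Finset.sum_range_succ,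
      Finset.sum_range_zero, Ring.choose_zero_right', ring_choose_succ, smul_eq_mul, pow_zero]
    push_cast
    ring
  simp only [hpartial, zero_add, id]

theorem HasCubicExpansion.exp (hf : HasCubicExpansion l s f a₀ a₁ a₂ a₃)
    (hs : Tendsto s l (𝓝 0)) :
    HasCubicExpansion l s (fun i => Real.exp (f i)) (Real.exp a₀) (Real.exp a₀ * a₁)
      (Real.exp a₀ * (a₂ + a₁ ^ 2 / 2)) (Real.exp a₀ * (a₃ + a₁ * a₂ + a₁ ^ 3 / 6)) := by
  have hconst : HasCubicExpansion l s (fun _ => -a₀) (-a₀) 0 0 0 := of_eq fun i => by ring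
  have hcentred : HasCubicExpansion l s (fun i => f i + -a₀) 0 a₁ a₂ a₃ := by
    simpa using hf.add hconst
  convert (hasCubicExpansion_exp.comp hcentred hs).const_mul (Real.exp a₀) using 1
  · funext i
    rw [← Real.exp_add]
    congr 1
    ring
  all_goals ring

end CubicExpansion

section MillsRatio

/-- The standard normal density. -/
noncomputable abbrev stdNormalPDF : ℝ → ℝ := gaussianPDFReal 0 1

theorem stdNormalPDF_apply (t : ℝ) : stdNormalPDF t = Real.exp (-t ^ 2 / 2) / √(2 * π) := by
  simp [gaussianPDFReal, div_eq_inv_mul]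

theorem stdNormalPDF_pos (t : ℝ) : 0 < stdNormalPDF t :=
  gaussianPDFReal_pos 0 1 t one_ne_zero

theorem hasDerivAt_stdNormalPDF (t : ℝ) : HasDerivAt stdNormalPDF (-t * stdNormalPDF t) t := by
  have hexponent : HasDerivAt (fun u : ℝ => -u ^ 2 / 2) (-t) t :=
    ((hasDerivAt_pow 2 t).fun_neg.div_const 2).congr_deriv (by push_cast; ring)
  rw [funext stdNormalPDF_apply]
  exact (hexponent.exp.div_const _).congr_deriv (by ring)

theorem continuous_stdNormalPDF : Continuous stdNormalPDF :=
  continuous_iff_continuousAt.2 fun t => (hasDerivAt_stdNormalPDF t).continuousAt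

theorem tendsto_stdNormalPDF_atTop : Tendsto stdNormalPDF atTop (𝓝 0) := by
  have hexponent : Tendsto (fun t : ℝ => -t ^ 2 / 2) atTop atBot := by
    simpa only [neg_div, Function.comp_def] using tendsto_neg_atTop_atBot.comp
      ((tendsto_pow_atTop two_ne_zero).atTop_div_const (zero_lt_two' ℝ))
  rw [funext stdNormalPDF_apply]
  simpa using (Real.tendsto_exp_atBot.comp hexponent).div_const √(2 * π)

theorem stdNormalCDF_eq_integral (t : ℝ) :
    stdNormalCDF t = ∫ u in Set.Iic t, stdNormalPDF u := by
  simp only [stdNormalCDF, stdNormalPDF_apply]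

theorem stdNormalCDF_eq_cdf (t : ℝ) : stdNormalCDF t = cdf (gaussianReal 0 1) t := by
  rw [cdf_eq_real, measureReal_def, gaussianReal_apply_eq_integral 0 one_ne_zero,
    ENNReal.toReal_ofReal (integral_nonneg (gaussianPDFReal_nonneg 0 1)), stdNormalCDF_eq_integral]

theorem stdNormalCDF_nonneg (t : ℝ) : 0 ≤ stdNormalCDF t :=
  stdNormalCDF_eq_cdf t ▸ cdf_nonneg _ t

theorem stdNormalCDF_le_one (t : ℝ) : stdNormalCDF t ≤ 1 :=
  stdNormalCDF_eq_cdf t ▸ cdf_le_one _ t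

theorem tendsto_stdNormalCDF_atTop : Tendsto stdNormalCDF atTop (𝓝 1) :=
  funext stdNormalCDF_eq_cdf ▸ tendsto_cdf_atTop _

theorem hasDerivAt_stdNormalCDF (t : ℝ) : HasDerivAt stdNormalCDF (stdNormalPDF t) t := by
  have hintegrable (a : ℝ) : IntegrableOn stdNormalPDF (Set.Iic a) :=
    (integrable_gaussianPDFReal 0 1).integrableOn
  have hinterval (y : ℝ) : stdNormalCDF y = (∫ u in 0..y, stdNormalPDF u) + stdNormalCDF 0 := by
    rw [stdNormalCDF_eq_integral, stdNormalCDF_eq_integral,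
      ← intervalIntegral.integral_Iic_sub_Iic (hintegrable 0) (hintegrable y), sub_add_cancel]
  rw [funext hinterval]
  exact (continuous_stdNormalPDF.integral_hasStrictDerivAt 0 t).hasDerivAt.add_const _

theorem le_of_hasDerivAt_nonpos_of_tendsto {f f' : ℝ → ℝ} {a c t : ℝ}
    (hf : ∀ y, a < y → HasDerivAt f (f' y) y) (hf' : ∀ y, a < y → f' y ≤ 0)
    (hlim : Tendsto f atTop (𝓝 c)) (ht : a < t) : c ≤ f t := by
  have hanti : AntitoneOn f (Set.Ioi a) := by
    refine antitoneOn_of_hasDerivWithinAt_nonpos (f' := f') (convex_Ioi a)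
      (fun y hy => (hf y hy).continuousAt.continuousWithinAt) ?_ ?_ <;> rw [interior_Ioi]
    · exact fun y hy => (hf y hy).hasDerivWithinAt
    · exact hf'
  refine le_of_tendsto hlim ?_
  filter_upwards [eventually_ge_atTop t] with y hy
  exact hanti ht (ht.trans_le hy) hy

/-- The partial sums of the divergent asymptotic series `∑ (-1)ᵏ (2k-1)‼ uᵏ` of the Mills ratio:
`1 - Φ(t) ~ φ(t)/t · ∑ (-1)ᵏ (2k-1)‼ t⁻²ᵏ`. At `k = 0` the truncated subtraction gives
`(2k-1)‼ = 0‼ = 1`, as it should. -/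
noncomputable def millsSum (m : ℕ) (u : ℝ) : ℝ :=
  ∑ k ∈ Finset.range m, (-1) ^ k * (2 * k - 1)‼ * u ^ k

theorem millsSum_succ (m : ℕ) (u : ℝ) :
    millsSum (m + 1) u = millsSum m u + (-1) ^ m * (2 * m - 1)‼ * u ^ m :=
  Finset.sum_range_succ _ m

theorem two_mul_add_one_doubleFactorial (m : ℕ) :
    (2 * (m + 1) - 1)‼ = (2 * m + 1) * (2 * m - 1)‼ :=
  Nat.doubleFactorial_add_one (2 * m)

theorem hasDerivAt_stdNormalPDF_mul_inv_pow (k : ℕ) {t : ℝ} (ht : t ≠ 0) :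
    HasDerivAt (fun y => stdNormalPDF y * y⁻¹ * (y⁻¹ ^ 2) ^ k)
      (-stdNormalPDF t * ((t⁻¹ ^ 2) ^ k + (2 * k + 1) * (t⁻¹ ^ 2) ^ (k + 1))) t := by
  have hderiv := (hasDerivAt_stdNormalPDF t).fun_mul ((hasDerivAt_inv ht).fun_pow (2 * k + 1))
  refine (hderiv.congr_of_eventuallyEq (.of_forall fun y => by ring)).congr_deriv ?_
  have hinv : t * t⁻¹ = 1 := mul_inv_cancel₀ ht
  rw [← inv_pow]
  push_cast
  generalize t⁻¹ = q at hinv ⊢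
  linear_combination (-stdNormalPDF t * q ^ (2 * k)) * hinv

theorem hasDerivAt_stdNormalPDF_mul_millsSum (m : ℕ) {t : ℝ} (ht : t ≠ 0) :
    HasDerivAt (fun y => stdNormalPDF y * y⁻¹ * millsSum m (y⁻¹ ^ 2))
      (-stdNormalPDF t * (1 - (-1) ^ m * (2 * m - 1)‼ * (t⁻¹ ^ 2) ^ m)) t := by
  induction m with
  | zero => simpa [millsSum] using hasDerivAt_const t (0 : ℝ)
  | succ m ih =>
    have hterm := (hasDerivAt_stdNormalPDF_mul_inv_pow m ht).const_mul
      ((-1) ^ m * ((2 * m - 1)‼ : ℝ))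
    refine ((ih.fun_add hterm).congr_of_eventuallyEq (.of_forall fun y => ?_)).congr_deriv ?_
    · simp only [millsSum_succ]
      ring
    · rw [two_mul_add_one_doubleFactorial]
      push_cast
      ring

theorem tendsto_stdNormalPDF_mul_millsSum_atTop (m : ℕ) :
    Tendsto (fun t => stdNormalPDF t * t⁻¹ * millsSum m (t⁻¹ ^ 2)) atTop (𝓝 0) := by
  have hcont : Continuous (millsSum m) := by
    unfold millsSum
    fun_prop
  have hinv := tendsto_inv_atTop_zero (𝕜 := ℝ)
  simpa using (tendsto_stdNormalPDF_atTop.mul hinv).mul ((hcont.tendsto (0 ^ 2)).comp (hinv.pow 2))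

theorem neg_one_pow_mul_millsError_nonneg (m : ℕ) {t : ℝ} (ht : 0 < t) :
    0 ≤ (-1) ^ m *
      (1 - stdNormalCDF t - stdNormalPDF t * t⁻¹ * millsSum m (t⁻¹ ^ 2)) := by
  refine le_of_hasDerivAt_nonpos_of_tendsto (a := 0)
    (f := fun y => (-1) ^ m *
      (1 - stdNormalCDF y - stdNormalPDF y * y⁻¹ * millsSum m (y⁻¹ ^ 2)))
    (f' := fun y => -(stdNormalPDF y * ((2 * m - 1)‼ * (y⁻¹ ^ 2) ^ m)))
    (fun y hy => ?_) (fun y _ => ?_) ?_ ht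
  · refine ((((hasDerivAt_stdNormalCDF y).const_sub 1).fun_sub
      (hasDerivAt_stdNormalPDF_mul_millsSum m hy.ne')).const_mul ((-1) ^ m)).congr_deriv ?_
    have hsign : ((-1 : ℝ) ^ m) * (-1) ^ m = 1 := by rw [← mul_pow]; norm_num
    linear_combination (-stdNormalPDF y * (2 * m - 1)‼ * (y⁻¹ ^ 2) ^ m) * hsign
  · have := stdNormalPDF_pos y
    exact neg_nonpos.2 (by positivity)
  · simpa using ((tendsto_stdNormalCDF_atTop.const_sub 1).sub
      (tendsto_stdNormalPDF_mul_millsSum_atTop m)).const_mul ((-1) ^ m)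

-- Consecutive partial sums bracket the tail, so the error is at most the first omitted term.
theorem abs_millsError_le (m : ℕ) {t : ℝ} (ht : 0 < t) :
    |1 - stdNormalCDF t - stdNormalPDF t * t⁻¹ * millsSum m (t⁻¹ ^ 2)| ≤
      stdNormalPDF t * t⁻¹ * ((2 * m - 1)‼ * (t⁻¹ ^ 2) ^ m) := by
  have hm := neg_one_pow_mul_millsError_nonneg m ht
  have hsucc := neg_one_pow_mul_millsError_nonneg (m + 1) ht
  rw [millsSum_succ] at hsucc
  have hsign : ((-1 : ℝ) ^ m) * (-1) ^ m = 1 := by rw [← mul_pow]; norm_num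
  have habs (e : ℝ) (he : 0 ≤ (-1) ^ m * e) : |e| = (-1) ^ m * e := by
    rw [← abs_of_nonneg he, abs_mul, abs_neg_one_pow, one_mul]
  rw [habs _ hm]
  linear_combination hsucc +
    (stdNormalPDF t * t⁻¹ * ((2 * m - 1)‼ * (t⁻¹ ^ 2) ^ m)) * hsign

end MillsRatio

section PoissonApproximation

theorem abs_one_sub_pow_sub_exp_le (n : ℕ) {q : ℝ} (hq₀ : 0 ≤ q) (hq₁ : q ≤ 1) :
    |(1 - q) ^ n - Real.exp (-(n * q))| ≤ n * q ^ 2 := by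
  have hbase : |1 - q - Real.exp (-q)| ≤ q ^ 2 := by
    have := Real.abs_exp_sub_one_sub_id_le (x := -q) (by rwa [abs_neg, abs_of_nonneg hq₀])
    calc |1 - q - Real.exp (-q)| = |Real.exp (-q) - 1 - -q| := by
          rw [abs_sub_comm]
          ring_nf
      _ ≤ q ^ 2 := by rwa [neg_sq] at this
  have hmax : max |1 - q| |Real.exp (-q)| ≤ 1 := by
    rw [abs_of_nonneg (sub_nonneg.2 hq₁), Real.abs_exp, max_le_iff, Real.exp_le_one_iff]
    constructor <;> linarith
  calc |(1 - q) ^ n - Real.exp (-(n * q))|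
      = |(1 - q) ^ n - Real.exp (-q) ^ n| := by rw [← Real.exp_nat_mul, mul_neg]
    _ ≤ |1 - q - Real.exp (-q)| * n * max |1 - q| |Real.exp (-q)| ^ (n - 1) :=
        abs_pow_sub_pow_le _ _ _
    _ ≤ q ^ 2 * n * 1 := by
        gcongr
        exact pow_le_one₀ (le_max_of_le_left (abs_nonneg _)) hmax
    _ = n * q ^ 2 := by ring

theorem one_sub_pow_sub_pow_sub_exp_isBigO_inv {q : ℕ → ℝ} (hq₀ : ∀ n, 0 ≤ q n)
    (hq₁ : ∀ n, q n ≤ 1) (hnq : (fun n => n * q n) =O[atTop] fun _ => (1 : ℝ)) :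
    (fun n => (1 - q n) ^ n - q n ^ n - Real.exp (-(n * q n)))
      =O[atTop] fun n => (n : ℝ)⁻¹ := by
  have hq : q =O[atTop] fun n => (n : ℝ)⁻¹ := by
    refine (hnq.mul (isBigO_refl (fun n : ℕ => (n : ℝ)⁻¹) atTop)).congr' ?_ (by simp)
    filter_upwards [eventually_ne_atTop 0] with n hn
    field_simp
  have hpow : (fun n => q n ^ n) =O[atTop] fun n => (n : ℝ)⁻¹ := by
    refine (IsBigO.of_norm_eventuallyLE ?_).trans hq
    filter_upwards [eventually_ne_atTop 0] with n hn
    rw [Real.norm_of_nonneg (pow_nonneg (hq₀ n) n)]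
    exact pow_le_of_le_one (hq₀ n) (hq₁ n) hn
  have hexp : (fun n => (1 - q n) ^ n - Real.exp (-(n * q n)))
      =O[atTop] fun n => (n : ℝ)⁻¹ := by
    refine (IsBigO.of_norm_le fun n => abs_one_sub_pow_sub_exp_le n (hq₀ n) (hq₁ n)).trans ?_
    simpa [sq, mul_assoc] using hnq.mul hq
  exact (hexp.sub hpow).congr_left fun n => by ring

end PoissonApproximation

section NormingSequence

/-- `b n` is the positive solution of `2π b² exp(b²) = n²`, for every `n ≥ 1`. The value `b 0` is
unconstrained. -/
def IsNormingSequence (b : ℕ → ℝ) : Prop :=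
  ∀ n : ℕ, 1 ≤ n → 0 < b n ∧ 2 * π * b n ^ 2 * Real.exp (b n ^ 2) = (n : ℝ) ^ 2

namespace IsNormingSequence

variable {b : ℕ → ℝ}

theorem eventually_pos (hb : IsNormingSequence b) : ∀ᶠ n in atTop, 0 < b n :=
  (eventually_ge_atTop 1).mono fun n hn => (hb n hn).1

theorem natCast_mul_stdNormalPDF (hb : IsNormingSequence b) {n : ℕ} (hn : 1 ≤ n) :
    n * stdNormalPDF (b n) = b n := by
  obtain ⟨hpos, hdef⟩ := hb n hn
  refine (pow_left_inj₀ (by have := stdNormalPDF_pos (b n); positivity) hpos.le two_ne_zero).1 ?_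
  have hexp : Real.exp (b n ^ 2) * Real.exp (-b n ^ 2 / 2) ^ 2 = 1 := by
    rw [← Real.exp_nat_mul, ← Real.exp_add, ← Real.exp_zero]
    congr 1
    push_cast
    ring
  rw [stdNormalPDF_apply, mul_pow, div_pow, Real.sq_sqrt (by positivity), ← hdef, mul_div_assoc',
    div_eq_iff (by positivity)]
  linear_combination (2 * π * b n ^ 2) * hexp

theorem tendsto_atTop (hb : IsNormingSequence b) : Tendsto b atTop atTop := by
  refine Filter.tendsto_atTop.2 fun M => ?_
  have hsq : Tendsto (fun n : ℕ => (n : ℝ) ^ 2) atTop atTop :=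
    (tendsto_pow_atTop two_ne_zero).comp tendsto_natCast_atTop_atTop
  filter_upwards [hsq.eventually_gt_atTop (2 * π * M ^ 2 * Real.exp (M ^ 2)),
    eventually_ge_atTop 1] with n hlarge hn
  obtain ⟨hpos, hdef⟩ := hb n hn
  by_contra! hlt
  have : 2 * π * b n ^ 2 * Real.exp (b n ^ 2) ≤ 2 * π * M ^ 2 * Real.exp (M ^ 2) := by gcongr
  linarith

theorem tendsto_sq_atTop (hb : IsNormingSequence b) : Tendsto (fun n => b n ^ 2) atTop atTop :=
  (tendsto_pow_atTop two_ne_zero).comp hb.tendsto_atTop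

theorem tendsto_inv_sq (hb : IsNormingSequence b) : Tendsto (fun n => (b n ^ 2)⁻¹) atTop (𝓝 0) :=
  hb.tendsto_sq_atTop.inv_tendsto_atTop

theorem inv_natCast_isBigO_inv_sq_pow (hb : IsNormingSequence b) (k : ℕ) :
    (fun n : ℕ => (n : ℝ)⁻¹) =O[atTop] fun n => (b n ^ 2)⁻¹ ^ k := by
  have hexp : (fun n => Real.exp (-(1 / 2) * b n ^ 2)) =O[atTop] fun n => (b n ^ 2)⁻¹ ^ k := by
    refine ((isLittleO_exp_neg_mul_rpow_atTop one_half_pos (-k)).isBigO.comp_tendsto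
      hb.tendsto_sq_atTop).congr_right fun n => ?_
    simp
  have hinv : (fun n => (√(2 * π))⁻¹ * (b n)⁻¹) =O[atTop] fun _ => (1 : ℝ) :=
    (hb.tendsto_atTop.inv_tendsto_atTop.const_mul _).isBigO_one ℝ
  refine (hexp.mul hinv).congr' ?_ (by simp)
  filter_upwards [eventually_ge_atTop 1] with n hn
  have hpos : 0 < b n := (hb n hn).1
  have hpdf := hb.natCast_mul_stdNormalPDF hn
  rw [stdNormalPDF_apply, show -b n ^ 2 / 2 = -(1 / 2) * b n ^ 2 by ring] at hpdf
  field_simp at hpdf ⊢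
  linarith

end IsNormingSequence

end NormingSequence

section Threshold

variable {β : ℝ}

/-- The threshold `h = √(c x + d)` with `c = 2 - 2β⁻²` and `d = β² - 2β⁻²`. -/
noncomputable def threshold (x β : ℝ) : ℝ := √((2 - 2 / β ^ 2) * x + (β ^ 2 - 2 / β ^ 2))

/-- The relative displacement `h²/β² - 1` of the squared threshold, as a function of `s = β⁻²`. -/
def relShift (x s : ℝ) : ℝ := 2 * x * s - 2 * (1 + x) * s ^ 2

/-- The ratio of `φ(h)/h` to its leading part `e⁻ˣ φ(β)/β`, as a function of `s = β⁻²`. -/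
noncomputable def tailPrefactor (x s : ℝ) : ℝ :=
  Real.exp ((1 + x) * s) * (1 + relShift x s) ^ (-(1 / 2) : ℝ)

theorem sq_mul_one_add_relShift (x : ℝ) (hβ : β ≠ 0) :
    β ^ 2 * (1 + relShift x (β ^ 2)⁻¹) = (2 - 2 / β ^ 2) * x + (β ^ 2 - 2 / β ^ 2) := by
  unfold relShift
  field_simp
  ring

theorem threshold_eq_mul_sqrt (x : ℝ) (hβ : 0 < β) :
    threshold x β = β * √(1 + relShift x (β ^ 2)⁻¹) := by
  rw [threshold, ← sq_mul_one_add_relShift x hβ.ne', Real.sqrt_mul (sq_nonneg β),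
    Real.sqrt_sq hβ.le]

theorem inv_threshold_sq {x : ℝ} (hβ : 0 < β) (hs : 0 < 1 + relShift x (β ^ 2)⁻¹) :
    (threshold x β)⁻¹ ^ 2 = (β ^ 2)⁻¹ * (1 + relShift x (β ^ 2)⁻¹) ^ (-1 : ℝ) := by
  rw [threshold_eq_mul_sqrt x hβ, inv_pow, mul_pow, Real.sq_sqrt hs.le, mul_inv,
    Real.rpow_neg_one]

theorem stdNormalPDF_threshold_mul_inv {x : ℝ} (hβ : 0 < β)
    (hs : 0 < 1 + relShift x (β ^ 2)⁻¹) :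
    stdNormalPDF (threshold x β) * (threshold x β)⁻¹ =
      stdNormalPDF β * β⁻¹ * (Real.exp (-x) * tailPrefactor x (β ^ 2)⁻¹) := by
  have hsq : threshold x β ^ 2 = β ^ 2 * (1 + relShift x (β ^ 2)⁻¹) := by
    rw [threshold_eq_mul_sqrt x hβ, mul_pow, Real.sq_sqrt hs.le]
  have hexp : Real.exp (-threshold x β ^ 2 / 2) =
      Real.exp (-β ^ 2 / 2) * (Real.exp (-x) * Real.exp ((1 + x) * (β ^ 2)⁻¹)) := by
    rw [← Real.exp_add, ← Real.exp_add, hsq, relShift]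
    congr 1
    field_simp
    ring
  have hinv : (threshold x β)⁻¹ = β⁻¹ * (1 + relShift x (β ^ 2)⁻¹) ^ (-(1 / 2) : ℝ) := by
    rw [threshold_eq_mul_sqrt x hβ, mul_inv, Real.sqrt_eq_rpow, Real.rpow_neg hs.le]
  rw [stdNormalPDF_apply, stdNormalPDF_apply, hexp, hinv, tailPrefactor]
  ring

theorem continuous_relShift (x : ℝ) : Continuous (relShift x) := by
  unfold relShift
  fun_prop

theorem eventually_nhds_one_add_relShift_pos (x : ℝ) : ∀ᶠ s in 𝓝 0, 0 < 1 + relShift x s := by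
  refine ((continuous_relShift x).const_add 1).continuousAt.eventually_const_lt ?_
  simp [relShift]

theorem hasCubicExpansion_relShift (x : ℝ) :
    HasCubicExpansion (𝓝 0) id (relShift x) 0 (2 * x) (-2 * (1 + x)) 0 :=
  .of_eq fun s => by simp only [relShift, id]; ring

theorem hasCubicExpansion_one_add_relShift_rpow (x a : ℝ) :
    HasCubicExpansion (𝓝 0) id (fun s => (1 + relShift x s) ^ a) 1 (2 * a * x)
      (-2 * a * (1 + x) + 2 * a * (a - 1) * x ^ 2)
      (-4 * a * (a - 1) * x * (1 + x) + 4 / 3 * a * (a - 1) * (a - 2) * x ^ 3) := by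
  convert (hasCubicExpansion_one_add_rpow a).comp (hasCubicExpansion_relShift x) tendsto_id
    using 1 <;> ring

theorem hasCubicExpansion_inv_sq_threshold (x : ℝ) :
    HasCubicExpansion (𝓝 0) id (fun s => s * (1 + relShift x s) ^ (-1 : ℝ))
      0 1 (-2 * x) (2 * (1 + x) + 4 * x ^ 2) := by
  have hid : HasCubicExpansion (𝓝 (0 : ℝ)) id (fun s => s) 0 1 0 0 := .of_eq fun s => by simp
  convert hid.mul (hasCubicExpansion_one_add_relShift_rpow x (-1)) tendsto_id using 1 <;> ring


theorem hasCubicExpansion_tailPrefactor (x : ℝ) :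
    HasCubicExpansion (𝓝 0) id (tailPrefactor x) 1 1 (3 / 2 + x + x ^ 2)
      (7 / 6 - x - x ^ 2 - 4 / 3 * x ^ 3) := by
  unfold tailPrefactor
  have hlinear : HasCubicExpansion (𝓝 0) id (fun s => (1 + x) * s) 0 (1 + x) 0 0 :=
    .of_eq fun s => by simp
  have hexp := hlinear.exp tendsto_id
  rw [Real.exp_zero] at hexp
  convert hexp.mul (hasCubicExpansion_one_add_relShift_rpow x (-(1 / 2))) tendsto_id using 1 <;>
    ring

theorem hasCubicExpansion_millsSum_four :
    HasCubicExpansion (𝓝 0) id (millsSum 4) 1 (-1) 3 (-15) :=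
  .of_eq fun u => by
    simp only [millsSum, Finset.sum_range_succ, Finset.sum_range_zero, id]
    norm_num [Nat.doubleFactorial]

theorem hasCubicExpansion_tailPrefactor_mul_millsSum (x : ℝ) :
    HasCubicExpansion (𝓝 0) id
      (fun s => tailPrefactor x s * millsSum 4 (s * (1 + relShift x s) ^ (-1 : ℝ)))
      1 0 (7 / 2 + 3 * x + x ^ 2) (-(43 / 3 + 14 * x + 6 * x ^ 2 + 4 / 3 * x ^ 3)) := by
  convert (hasCubicExpansion_tailPrefactor x).mul
    (hasCubicExpansion_millsSum_four.comp (hasCubicExpansion_inv_sq_threshold x) tendsto_id)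
    tendsto_id using 1 <;> ring

end Threshold

namespace IsNormingSequence

variable {b : ℕ → ℝ}

theorem eventually_one_add_relShift_pos (hb : IsNormingSequence b) (x : ℝ) :
    ∀ᶠ n in atTop, 0 < 1 + relShift x (b n ^ 2)⁻¹ :=
  hb.tendsto_inv_sq.eventually (eventually_nhds_one_add_relShift_pos x)

theorem eventually_threshold_radicand_pos (hb : IsNormingSequence b) (x : ℝ) :
    ∀ᶠ n in atTop, 0 < (2 - 2 / b n ^ 2) * x + (b n ^ 2 - 2 / b n ^ 2) := by
  filter_upwards [hb.eventually_pos, hb.eventually_one_add_relShift_pos x] with n hpos hshift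
  rw [← sq_mul_one_add_relShift x hpos.ne']
  positivity

theorem natCast_mul_stdNormalPDF_threshold (hb : IsNormingSequence b) {x : ℝ} {n : ℕ}
    (hn : 1 ≤ n) (hshift : 0 < 1 + relShift x (b n ^ 2)⁻¹) :
    n * (stdNormalPDF (threshold x (b n)) * (threshold x (b n))⁻¹) =
      Real.exp (-x) * tailPrefactor x (b n ^ 2)⁻¹ := by
  have hpos := (hb n hn).1
  rw [stdNormalPDF_threshold_mul_inv hpos hshift, ← mul_assoc, ← mul_assoc (n : ℝ),
    hb.natCast_mul_stdNormalPDF hn, mul_inv_cancel₀ hpos.ne', one_mul]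

theorem abs_natCast_mul_tail_sub_le (hb : IsNormingSequence b) {x : ℝ} {n : ℕ} (m : ℕ)
    (hn : 1 ≤ n) (hshift : 0 < 1 + relShift x (b n ^ 2)⁻¹) {u : ℝ}
    (hu : u = (b n ^ 2)⁻¹ * (1 + relShift x (b n ^ 2)⁻¹) ^ (-1 : ℝ)) :
    |n * (1 - stdNormalCDF (threshold x (b n))) -
        Real.exp (-x) * (tailPrefactor x (b n ^ 2)⁻¹ * millsSum m u)| ≤
      Real.exp (-x) * tailPrefactor x (b n ^ 2)⁻¹ * ((2 * m - 1)‼ * u ^ m) := by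
  have hpos := (hb n hn).1
  have hthreshold : 0 < threshold x (b n) := by
    rw [threshold_eq_mul_sqrt x hpos]
    positivity
  have hmills := abs_millsError_le m hthreshold
  rw [inv_threshold_sq hpos hshift, ← hu] at hmills
  have hscaled := mul_le_mul_of_nonneg_left hmills (Nat.cast_nonneg' (α := ℝ) n)
  rw [← Nat.abs_cast, ← abs_mul, mul_sub, Nat.abs_cast, ← mul_assoc, ← mul_assoc (n : ℝ) (_ * _),
    hb.natCast_mul_stdNormalPDF_threshold hn hshift] at hscaled
  rwa [← mul_assoc]

theorem hasCubicExpansion_natCast_mul_tail (hb : IsNormingSequence b) (x : ℝ) :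
    HasCubicExpansion atTop (fun n => (b n ^ 2)⁻¹)
      (fun n => n * (1 - stdNormalCDF (threshold x (b n))))
      (Real.exp (-x)) 0 (Real.exp (-x) * (7 / 2 + 3 * x + x ^ 2))
      (-(Real.exp (-x) * (43 / 3 + 14 * x + 6 * x ^ 2 + 4 / 3 * x ^ 3))) := by
  have hs := hb.tendsto_inv_sq
  have hmain := ((hasCubicExpansion_tailPrefactor_mul_millsSum x).comp_tendsto hs).const_mul
    (Real.exp (-x))
  have hu := (hasCubicExpansion_inv_sq_threshold x).comp_tendsto hs
  have hprefactor := (hasCubicExpansion_tailPrefactor x).comp_tendsto hs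
  have hrem := (((hprefactor.isBigO_one hs).const_mul_left (Real.exp (-x))).mul
    (((hu.isBigO_self hs).pow 4).const_mul_left ((2 * 4 - 1)‼ : ℝ)))
  simp only [one_mul] at hrem
  rw [mul_one, mul_zero, mul_neg] at hmain
  refine hmain.add_isBigO ((IsBigO.of_norm_eventuallyLE ?_).trans hrem)
  filter_upwards [eventually_ge_atTop 1, hb.eventually_one_add_relShift_pos x] with n hn hshift
  exact hb.abs_natCast_mul_tail_sub_le 4 hn hshift rfl

theorem hasCubicExpansion_pow_sub_pow (hb : IsNormingSequence b) (x : ℝ) :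
    HasCubicExpansion atTop (fun n => (b n ^ 2)⁻¹)
      (fun n => stdNormalCDF (threshold x (b n)) ^ n - (1 - stdNormalCDF (threshold x (b n))) ^ n)
      (gumbel x) 0 (gumbel x * Real.exp (-x) * (-(7 / 2 + 3 * x + x ^ 2)))
      (gumbel x * Real.exp (-x) * (43 / 3 + 14 * x + 6 * x ^ 2 + 4 / 3 * x ^ 3)) := by
  have htail := hb.hasCubicExpansion_natCast_mul_tail x
  have hs := hb.tendsto_inv_sq
  have hpoisson := one_sub_pow_sub_pow_sub_exp_isBigO_inv
    (fun n => sub_nonneg.2 (stdNormalCDF_le_one (threshold x (b n))))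
    (fun n => sub_le_self 1 (stdNormalCDF_nonneg _)) (htail.isBigO_one hs)
  simp only [sub_sub_cancel] at hpoisson
  have hexp := (htail.const_mul (-1)).exp hs
  simp only [neg_one_mul] at hexp
  unfold gumbel
  convert hexp.add_isBigO (hpoisson.trans (hb.inv_natCast_isBigO_inv_sq_pow 4)) using 1 <;>
    ring

end IsNormingSequence

/-- Theorem 2.1, `t = 2`: With `b_n` the unique positive solution of
`2π b_n² exp(b_n²) = n²`, `c_n = 2 − 2b_n^{−2}`, `d_n = b_n² − 2b_n^{−2}`,
`h_n = (c_n x + d_n)^{1/2}` and `F_n(x) = Φ(h_n)^n − (1 − Φ(h_n))^n`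
(which equals `P(M_n² ≤ c_n x + d_n)`):
`F_n(x) = Λ(x) + b_n^{−4} Λ(x) e^{−x}(k₁ + b_n^{−2} k₂ + O(b_n^{−4}))`, with
`k₁ = −(7/2 + 3x + x²)` and `k₂ = 43/3 + 14x + 6x² + (4/3)x³`. -/
theorem powered_extremes_df_higher_order_expansion_t_eq_two
    (b : ℕ → ℝ)
    (hb : ∀ n : ℕ, 1 ≤ n → 0 < b n ∧
      2 * Real.pi * (b n) ^ 2 * Real.exp ((b n) ^ 2) = (n : ℝ) ^ 2)
    (x : ℝ)
    (c d h F : ℕ → ℝ)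
    (hc : ∀ n : ℕ, c n = 2 - 2 / (b n) ^ 2)
    (hd : ∀ n : ℕ, d n = (b n) ^ 2 - 2 / (b n) ^ 2)
    (hh : ∀ n : ℕ, h n = (c n * x + d n) ^ ((1 : ℝ) / 2))
    (hF : ∀ n : ℕ, F n = stdNormalCDF (h n) ^ n - (1 - stdNormalCDF (h n)) ^ n) :
    ∃ C > (0 : ℝ), ∃ N : ℕ, ∀ n : ℕ, N ≤ n →
      0 < c n * x + d n ∧
      |F n - gumbel x -
        gumbel x * Real.exp (-x) / (b n) ^ 4 * (-(7 / 2 + 3 * x + x ^ 2)) -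
        gumbel x * Real.exp (-x) / (b n) ^ 6 *
          (43 / 3 + 14 * x + 6 * x ^ 2 + 4 / 3 * x ^ 3)|
      ≤ C / (b n) ^ 8 := by
  replace hb : IsNormingSequence b := hb
  have hh' (n : ℕ) : h n = threshold x (b n) := by
    rw [hh, hc, hd, threshold, Real.sqrt_eq_rpow]
  obtain ⟨C, hC, hbound⟩ := (hb.hasCubicExpansion_pow_sub_pow x).exists_pos
  obtain ⟨N, hN⟩ := eventually_atTop.1
    ((hb.eventually_threshold_radicand_pos x).and hbound.bound)
  refine ⟨C, hC, N, fun n hn => ?_⟩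
  obtain ⟨hpos, hle⟩ := hN n hn
  refine ⟨by rwa [hc, hd], ?_⟩
  rw [Real.norm_eq_abs, Real.norm_of_nonneg (by positivity)] at hle
  rw [hF, hh']
  convert hle using 1
  · congr 1
    ring
  · ring
end
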